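/- Let σ be a permutation of a finite set of size m and let P_σ be the associated permutation matrix acting on K^m for a commutative ring K. Then the characteristic polynomial det(t·I − P_σ) equals the product over the cycles c of σ of (t^{|c|} − 1), where |c| is the length of the cycle. -/

import Mathlib

/-!
Only the identity and `τ` itself contribute to the Leibniz expansion of `det (D - W * P_τ)` when `D`
and `W` are diagonal and `τ` permutes at least two points transitively: if `π i ∈ {i, τ i}` for
all `i`, then by injectivity the fixed points of `π` form a `τ`-invariant set. The sign of `τ`
cancels against the minus signs, leaving `∏ dᵢ - ∏ wᵢ`. For arbitrary `σ` the matrix is block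
diagonal along the cycles of `σ`, and the characteristic matrix of `P_σ` is the case `D = X • 1`,
`W = 1`.
-/

open Equiv Equiv.Perm Matrix Finset

section Transitive

variable {α : Type*} {π τ : Perm α}

theorem iff_of_sameCycle {p : α → Prop} (hp : ∀ x, p (τ x) ↔ p x) {x y : α}
    (hxy : τ.SameCycle x y) : p x ↔ p y := by
  suffices forward : ∀ {a b : α}, τ.SameCycle a b → p a → p b from
    ⟨forward hxy, forward hxy.symm⟩
  rintro a _ ⟨k, rfl⟩ ha
  simpa only [subtypePerm_zpow, subtypePerm_apply] using ((τ.subtypePerm hp ^ k) ⟨a, ha⟩).2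

theorem perm_eq_one_or_eq (hτ : ∀ x y, τ.SameCycle x y) (hπ : ∀ x, π x = x ∨ π x = τ x) :
    π = 1 ∨ π = τ := by
  have fixed_iff (x : α) : π (τ x) = τ x ↔ π x = x := by
    constructor
    · intro hτx
      rcases hπ x with hx | hx
      · exact hx
      · exact hx.trans (π.injective (hx.trans hτx.symm)).symm
    · intro hx
      obtain ⟨y, hy⟩ := π.surjective (τ x)
      rcases hπ y with hyy | hyy
      · rwa [← hyy.symm.trans hy]
      · obtain rfl : y = x := τ.injective (hyy.symm.trans hy)
        rw [← hy, hx, hx]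
  by_cases hfix : ∃ x, π x = x
  · obtain ⟨x, hx⟩ := hfix
    exact .inl <| Perm.ext fun y =>
      (iff_of_sameCycle (p := fun x => π x = x) fixed_iff (hτ x y)).1 hx
  · exact .inr <| Perm.ext fun y => (hπ y).resolve_left fun hy => hfix ⟨y, hy⟩

theorem apply_ne_self_of_forall_sameCycle [Nontrivial α] (hτ : ∀ x y, τ.SameCycle x y) (x : α) :
    τ x ≠ x := by
  obtain ⟨y, hy⟩ := exists_ne x
  exact fun hx => hy ((hτ x y).eq_of_left hx).symm

theorem sign_of_forall_sameCycle [Fintype α] [DecidableEq α] [Nontrivial α]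
    (hτ : ∀ x y, τ.SameCycle x y) : sign τ = -(-1) ^ Fintype.card α := by
  have hne := apply_ne_self_of_forall_sameCycle hτ
  obtain ⟨x⟩ := ‹Nontrivial α›.to_nonempty
  have hcycle : τ.IsCycle := ⟨x, hne x, fun y _ => hτ x y⟩
  have hsupport : τ.support = univ := by
    ext y
    simp [hne y]
  rw [hcycle.sign, hsupport, card_univ]

end Transitive

section Determinant

variable {n R : Type*} [Fintype n] [DecidableEq n] [CommRing R]

theorem det_eq_prod_diag_add_sign_mul_prod [Nontrivial n] {M : Matrix n n R} {τ : Perm n}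
    (hτ : ∀ x y, τ.SameCycle x y) (hM : ∀ i j, j ≠ i → j ≠ τ i → M i j = 0) :
    M.det = ∏ i, M i i + sign τ * ∏ i, M i (τ i) := by
  have one_ne : (1 : Perm n) ≠ τ := by
    rintro rfl
    obtain ⟨x⟩ := ‹Nontrivial n›.to_nonempty
    exact apply_ne_self_of_forall_sameCycle hτ x rfl
  have other_eq_zero (π : Perm n) (hπ : π ≠ 1 ∧ π ≠ τ) : sign π * ∏ i, M i (π i) = 0 := by
    obtain ⟨i, hi_one, hi_τ⟩ : ∃ i, π i ≠ i ∧ π i ≠ τ i := by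
      by_contra! hall
      exact (perm_eq_one_or_eq hτ fun i => or_iff_not_imp_left.2 (hall i)).elim hπ.1 hπ.2
    rw [prod_eq_zero (mem_univ i) (hM i (π i) hi_one hi_τ), mul_zero]
  rw [← det_transpose, det_apply']
  simp only [transpose_apply]
  rw [Fintype.sum_eq_add 1 τ one_ne other_eq_zero]
  simp

theorem det_diagonal_sub_diagonal_mul_permMatrix_of_forall_sameCycle [Nonempty n] {τ : Perm n}
    (hτ : ∀ x y, τ.SameCycle x y) (d w : n → R) :
    (diagonal d - diagonal w * τ.permMatrix R).det = ∏ i, d i - ∏ i, w i := by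
  rcases subsingleton_or_nontrivial n with _ | _
  · obtain ⟨x⟩ := ‹Nonempty n›
    have : Unique n := uniqueOfSubsingleton x
    simp [Subsingleton.elim (τ default) default, toPEquiv_apply]
  · have hne := apply_ne_self_of_forall_sameCycle hτ
    rw [det_eq_prod_diag_add_sign_mul_prod hτ, sign_of_forall_sameCycle hτ]
    · have sign_cancel : (-1 : R) ^ Fintype.card n * (-1) ^ Fintype.card n = 1 := by
        rw [← mul_pow, neg_one_mul, neg_neg, one_pow]
      simp [toPEquiv_apply, hne, (hne _).symm, prod_neg, ← mul_assoc, sign_cancel,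
        sub_eq_add_neg]
    · intro i j hji hjτ
      simp [toPEquiv_apply, hji.symm, hjτ.symm]

theorem det_eq_prod_det_toSquareBlock {α : Type*} [DecidableEq α] {b : n → α} {M : Matrix n n R}
    (hM : ∀ i j, b i ≠ b j → M i j = 0) :
    M.det = ∏ a ∈ univ.image b, (M.toSquareBlock b a).det := by
  -- A block diagonal matrix is block triangular for any linear order on the blocks.
  let : LinearOrder α := IsWellOrder.linearOrder WellOrderingRel
  exact BlockTriangular.det fun i j hij => hM i j hij.ne'

theorem det_eq_prod_det_submatrix_parts (P : Finpartition (univ : Finset n)) {M : Matrix n n R}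
    (hM : ∀ i j, j ∉ P.part i → M i j = 0) :
    M.det = ∏ c ∈ P.parts, (M.submatrix ((↑) : c → n) (↑)).det := by
  have image_part : univ.image P.part = P.parts := by
    apply coe_injective
    rw [coe_image]
    exact P.part_surjOn.image_eq_of_mapsTo fun i _ => P.part_mem.2 (mem_univ i)
  rw [det_eq_prod_det_toSquareBlock (b := P.part), image_part]
  · refine prod_congr rfl fun c hc => ?_
    exact det_submatrix_equiv_self (Equiv.subtypeEquivRight fun i => P.part_eq_iff_mem hc)
      (M.submatrix ((↑) : c → n) (↑))
  · exact fun i j hij => hM i j fun hj =>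
      hij ((P.mem_part_iff_part_eq_part (mem_univ j) (mem_univ i)).1 hj).symm

theorem submatrix_diagonal_sub_diagonal_mul_permMatrix {S : Type*} [NonAssocRing S]
    {σ : Perm n} {c : Finset n} (hc : ∀ i, σ i ∈ c ↔ i ∈ c) (d w : n → S) :
    (diagonal d - diagonal w * σ.permMatrix S).submatrix ((↑) : c → n) (↑) =
      diagonal (fun i : c => d i) -
        diagonal (fun i : c => w i) * (σ.subtypePerm hc).permMatrix S := by
  ext ⟨i, hi⟩ ⟨j, hj⟩
  simp [diagonal_apply, toPEquiv_apply]

theorem det_diagonal_sub_diagonal_mul_permMatrix (σ : Perm n)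
    [DecidableRel (SameCycle.setoid σ).r] (d w : n → R) :
    (diagonal d - diagonal w * σ.permMatrix R).det =
      ∏ c ∈ (Finpartition.ofSetoid (SameCycle.setoid σ)).parts, (∏ i ∈ c, d i - ∏ i ∈ c, w i) := by
  set P := Finpartition.ofSetoid (SameCycle.setoid σ)
  have mem_part {i j : n} : j ∈ P.part i ↔ σ.SameCycle i j :=
    Finpartition.mem_part_ofSetoid_iff_rel
  rw [det_eq_prod_det_submatrix_parts P]
  · refine prod_congr rfl fun c hc => ?_
    obtain ⟨x, hx⟩ := P.nonempty_of_mem_parts hc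
    have mem_c (i : n) : i ∈ c ↔ σ.SameCycle x i := by
      rw [← P.part_eq_of_mem hc hx, mem_part]
    have apply_mem_iff (i : n) : σ i ∈ c ↔ i ∈ c := by
      rw [mem_c, mem_c, sameCycle_apply_right]
    have transitive (i j : c) : (σ.subtypePerm apply_mem_iff).SameCycle i j :=
      sameCycle_subtypePerm.2 (((mem_c i).1 i.2).symm.trans ((mem_c j).1 j.2))
    have : Nonempty c := ⟨⟨x, hx⟩⟩
    rw [submatrix_diagonal_sub_diagonal_mul_permMatrix apply_mem_iff,
      det_diagonal_sub_diagonal_mul_permMatrix_of_forall_sameCycle transitive,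
      prod_coe_sort c d, prod_coe_sort c w]
  · intro i j hj
    have hij : j ≠ i := by
      rintro rfl
      exact hj (mem_part.2 .rfl)
    have hσ : j ≠ σ i := by
      rintro rfl
      exact hj (mem_part.2 (sameCycle_apply_right.2 .rfl))
    simp [toPEquiv_apply, hij.symm, hσ.symm]

theorem charmatrix_permMatrix (σ : Perm n) :
    (σ.permMatrix R).charmatrix =
      diagonal (fun _ => Polynomial.X) - σ.permMatrix (Polynomial R) := by
  rw [charmatrix, RingHom.mapMatrix_apply, PEquiv.map_toMatrix, scalar_apply]

end Determinant

open scoped Classical in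
/-- The characteristic polynomial of a permutation matrix is the product,
over the cycles (orbits) of the permutation, of (t^{|c|} − 1). -/
theorem stmt_2 (K : Type*) [CommRing K] (n : Type*) [Fintype n] [DecidableEq n]
    (m : ℕ) (hm : Fintype.card n = m) (σ : Equiv.Perm n) :
    (σ.permMatrix K).charpoly
      = ∏ c ∈ Finset.univ.image (fun x : n => Finset.univ.filter fun y => σ.SameCycle x y),
          (Polynomial.X ^ c.card - 1) := by
  have hdet := det_diagonal_sub_diagonal_mul_permMatrix σ
    (fun _ => (Polynomial.X : Polynomial K)) (fun _ => 1)
  rw [diagonal_one, one_mul, ← charmatrix_permMatrix, ← charpoly] at hdet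
  simp only [prod_const, one_pow, Finpartition.ofSetoid, Finpartition.ofSetSetoid_parts] at hdet
  convert! hdet
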